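/- (Soundness of treatment Markov blankets.) Let A be a binary treatment with potential outcomes Y_0, Y_1, and let V = (V_i)_{i ∈ I} be a finite family of covariates such that V_I controls for confounding, i.e., Y_a ⊥⊥ A | V_I for a = 0, 1. Then every treatment Markov blanket controls for confounding: for every J ∈ 𝔯_A(V) and a = 0, 1, Y_a ⊥⊥ A | V_J. -/

import Mathlib

/-!
Write `𝓕 = σ(V_I)` and `𝓖 = σ(V_J) ≤ 𝓕`, and let `B ∈ σ(A)`, `C ∈ σ(Y_a)`. Since
`𝓕 = σ(V_J, V_{I∖J})`, the blanket property `A ⊥⊥ V_{I∖J} | V_J` says that conditioning `A` on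
`V_{I∖J}` in addition to `V_J` changes nothing: `P(B | 𝓕) = P(B | 𝓖)` almost surely
(`condExp_eq_of_condIndepGiven`). The tower property, the conditional independence given `𝓕`, and
pulling out the `𝓖`-measurable factor then give
`P(C ∩ B | 𝓖) = E[P(C | 𝓕) P(B | 𝓕) | 𝓖] = E[P(C | 𝓕) P(B | 𝓖) | 𝓖] = P(C | 𝓖) P(B | 𝓖)`
(`condIndepFun_of_condExp_eq`).
-/


open MeasureTheory ProbabilityTheory

/-- `X ⊥⊥ Y | W` under `μ`: conditional independence of the random elements `X` and `Y`
given the σ-algebra generated by the random element `W`. -/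
def CondIndepGiven {Ω α β γ : Type*} [mΩ : MeasurableSpace Ω] [StandardBorelSpace Ω]
    [MeasurableSpace α] [MeasurableSpace β] [MeasurableSpace γ]
    (μ : Measure Ω) [IsFiniteMeasure μ]
    (X : Ω → α) (Y : Ω → β) (W : Ω → γ) : Prop :=
  ∃ hle : MeasurableSpace.comap W inferInstance ≤ mΩ,
    CondIndepFun (MeasurableSpace.comap W inferInstance) hle X Y μ

/-- The subvector `(V_i)_{i ∈ J}` of a family of random variables. -/
def subvec {Ω I : Type*} (V : I → Ω → ℝ) (J : Set I) : Ω → (J → ℝ) :=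
  fun ω j => V j ω

/-- The joint law of `(V_i)_{i ∈ I}` is absolutely continuous w.r.t. the product
`⨂_{i ∈ I} P_{V_i}` of its one-dimensional marginal laws, with a density that is positive
almost everywhere. -/
def PositiveFamilyDensity {Ω I : Type*} [MeasurableSpace Ω] [Fintype I]
    (μ : Measure Ω) (V : I → Ω → ℝ) : Prop :=
  μ.map (fun ω i => V i ω) ≪ Measure.pi (fun i => μ.map (V i)) ∧
    ∀ᵐ x ∂(Measure.pi fun i => μ.map (V i)),
      0 < (μ.map (fun ω i => V i ω)).rnDeriv (Measure.pi fun i => μ.map (V i)) x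

/-- The joint law of `(W, (V_i)_{i ∈ I})` is absolutely continuous w.r.t. the product
`P_W ⊗ ⨂_{i ∈ I} P_{V_i}` of its one-dimensional marginal laws, with a density that is
positive almost everywhere. -/
def PositivePairDensity {Ω α I : Type*} [MeasurableSpace Ω] [MeasurableSpace α] [Fintype I]
    (μ : Measure Ω) (W : Ω → α) (V : I → Ω → ℝ) : Prop :=
  μ.map (fun ω => (W ω, fun i => V i ω)) ≪ (μ.map W).prod (Measure.pi fun i => μ.map (V i)) ∧
    ∀ᵐ x ∂((μ.map W).prod (Measure.pi fun i => μ.map (V i))),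
      0 < (μ.map (fun ω => (W ω, fun i => V i ω))).rnDeriv
            ((μ.map W).prod (Measure.pi fun i => μ.map (V i))) x

/-- The joint law of `(W, U, (V_i)_{i ∈ I})` is absolutely continuous w.r.t. the product
`P_W ⊗ P_U ⊗ ⨂_{i ∈ I} P_{V_i}` of its one-dimensional marginal laws, with a density that is
positive almost everywhere. -/
def PositiveTripleDensity {Ω I : Type*} [MeasurableSpace Ω] [Fintype I]
    (μ : Measure Ω) (W U : Ω → ℝ) (V : I → Ω → ℝ) : Prop :=
  μ.map (fun ω => (W ω, U ω, fun i => V i ω)) ≪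
      (μ.map W).prod ((μ.map U).prod (Measure.pi fun i => μ.map (V i))) ∧
    ∀ᵐ x ∂((μ.map W).prod ((μ.map U).prod (Measure.pi fun i => μ.map (V i)))),
      0 < (μ.map (fun ω => (W ω, U ω, fun i => V i ω))).rnDeriv
            ((μ.map W).prod ((μ.map U).prod (Measure.pi fun i => μ.map (V i)))) x

/-- `J ∈ 𝔯_A(V)`: `J` is a treatment Markov blanket of the family `V`,
i.e. `A ⊥⊥ V_{I∖J} | V_J`. -/
def IsTreatBlanket {Ω I : Type*} [MeasurableSpace Ω] [StandardBorelSpace Ω]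
    (μ : Measure Ω) [IsFiniteMeasure μ] (A : Ω → ℝ) (V : I → Ω → ℝ) (J : Set I) : Prop :=
  CondIndepGiven μ A (subvec V (Set.univ \ J)) (subvec V J)

/-- `J ∈ 𝔯_{Y|A}(V)`: `J` is an outcome Markov blanket of the family `V`,
i.e. `Y ⊥⊥ V_{I∖J} | (A, V_J)`. -/
def IsOutBlanket {Ω I : Type*} [MeasurableSpace Ω] [StandardBorelSpace Ω]
    (μ : Measure Ω) [IsFiniteMeasure μ] (A Y : Ω → ℝ) (V : I → Ω → ℝ) (J : Set I) : Prop :=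
  CondIndepGiven μ Y (subvec V (Set.univ \ J)) (fun ω => (A ω, subvec V J ω))

/-- `R_A(V_J)`: the treatment Markov boundary of the subfamily `(V_i)_{i ∈ J}`, i.e. the
intersection of all `J' ⊆ J` such that `A ⊥⊥ V_{J∖J'} | V_{J'}`. -/
def treatBoundary {Ω I : Type*} [MeasurableSpace Ω] [StandardBorelSpace Ω]
    (μ : Measure Ω) [IsFiniteMeasure μ] (A : Ω → ℝ) (V : I → Ω → ℝ) (J : Set I) : Set I :=
  ⋂₀ {J' : Set I | J' ⊆ J ∧ CondIndepGiven μ A (subvec V (J \ J')) (subvec V J')}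

/-- `R_{Y|A}(V_J)`: the outcome Markov boundary of the subfamily `(V_i)_{i ∈ J}`, i.e. the
intersection of all `J' ⊆ J` such that `Y ⊥⊥ V_{J∖J'} | (A, V_{J'})`. -/
def outBoundary {Ω I : Type*} [MeasurableSpace Ω] [StandardBorelSpace Ω]
    (μ : Measure Ω) [IsFiniteMeasure μ] (A Y : Ω → ℝ) (V : I → Ω → ℝ) (J : Set I) : Set I :=
  ⋂₀ {J' : Set I | J' ⊆ J ∧
        CondIndepGiven μ Y (subvec V (J \ J')) (fun ω => (A ω, subvec V J' ω))}

/-- `A` is a binary treatment taking values in `{0, 1}`. -/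
def IsBinary {Ω : Type*} (A : Ω → ℝ) : Prop :=
  ∀ ω, A ω = 0 ∨ A ω = 1

/-- Consistency of the observed outcome `Y` with the potential outcomes `Y₀, Y₁`:
`Y = Y₁` a.s. on `{A = 1}` and `Y = Y₀` a.s. on `{A = 0}`. -/
def Consistency {Ω : Type*} [MeasurableSpace Ω] (μ : Measure Ω) (A Y Y0 Y1 : Ω → ℝ) : Prop :=
  (∀ᵐ ω ∂μ, A ω = 1 → Y ω = Y1 ω) ∧ (∀ᵐ ω ∂μ, A ω = 0 → Y ω = Y0 ω)

/-- The random vector `C` controls for confounding: `Y_a ⊥⊥ A | C` for `a = 0, 1`. -/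
def ControlsConfounding {Ω γ : Type*} [MeasurableSpace Ω] [StandardBorelSpace Ω]
    [MeasurableSpace γ] (μ : Measure Ω) [IsFiniteMeasure μ]
    (A Y0 Y1 : Ω → ℝ) (C : Ω → γ) : Prop :=
  CondIndepGiven μ Y0 A C ∧ CondIndepGiven μ Y1 A C

lemma measurable_subvec {Ω I : Type*} {_ : MeasurableSpace Ω} {V : I → Ω → ℝ}
    {J : Set I} (hV : ∀ i ∈ J, Measurable (V i)) : Measurable (subvec V J) :=
  measurable_pi_iff.2 fun j => hV j j.2

lemma measurable_comap_subvec {Ω I : Type*} (V : I → Ω → ℝ) {J : Set I} {i : I} (hi : i ∈ J) :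
    Measurable[MeasurableSpace.comap (subvec V J) inferInstance] (V i) :=
  (measurable_pi_apply (⟨i, hi⟩ : J)).comp (comap_measurable (subvec V J))

lemma comap_subvec_mono {Ω I : Type*} (V : I → Ω → ℝ) {J K : Set I} (h : J ⊆ K) :
    MeasurableSpace.comap (subvec V J) inferInstance
      ≤ MeasurableSpace.comap (subvec V K) inferInstance :=
  Measurable.comap_le (measurable_subvec fun _ hj => measurable_comap_subvec V (h hj))

lemma comap_subvec_univ {Ω I : Type*} (V : I → Ω → ℝ) (J : Set I) :
    MeasurableSpace.comap (subvec V Set.univ) inferInstance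
      = MeasurableSpace.comap (fun ω => (subvec V J ω, subvec V (Set.univ \ J) ω))
          inferInstance := by
  refine le_antisymm (Measurable.comap_le (measurable_subvec fun i _ => ?_))
    (Measurable.comap_le (Measurable.prodMk ?_ ?_))
  · have h := comap_measurable (m := inferInstance) (fun ω => (subvec V J ω, subvec V (Set.univ \ J) ω))
    by_cases hi : i ∈ J
    · exact (measurable_pi_apply (⟨i, hi⟩ : J)).comp (measurable_fst.comp h)
    · exact (measurable_pi_apply (⟨i, Set.mem_univ i, hi⟩ : (Set.univ \ J : Set I))).comp
        (measurable_snd.comp h)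
  · exact measurable_subvec fun _ _ => measurable_comap_subvec V (Set.mem_univ _)
  · exact measurable_subvec fun _ _ => measurable_comap_subvec V (Set.mem_univ _)

/-- If `X ⊥⊥ Z | W`, then the conditional law of `X` given `(W, Z)` is that given `W` alone. -/
lemma condExp_eq_of_condIndepGiven {Ω β γ : Type*} [MeasurableSpace Ω] [StandardBorelSpace Ω]
    [MeasurableSpace β] [StandardBorelSpace β] [Nonempty β] [MeasurableSpace γ]
    {μ : Measure Ω} [IsFiniteMeasure μ] {X : Ω → ℝ} {Z : Ω → β} {W : Ω → γ}
    (hX : Measurable X) (hZ : Measurable Z) (hW : Measurable W)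
    (h : CondIndepGiven μ X Z W) {t : Set ℝ} (ht : MeasurableSet t) :
    (μ⟦X ⁻¹' t | MeasurableSpace.comap (fun ω => (W ω, Z ω)) inferInstance⟧)
      =ᵐ[μ] (μ⟦X ⁻¹' t | MeasurableSpace.comap W inferInstance⟧) := by
  obtain ⟨_, h⟩ := h
  have h1 := ae_of_ae_map (hW.prodMk hZ).aemeasurable
    ((condIndepFun_iff_condDistrib_prod_ae_eq_prodMkRight hX hZ hW).1 h.symm)
  filter_upwards [h1, condDistrib_ae_eq_condExp (μ := μ) (hW.prodMk hZ) hX ht,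
    condDistrib_ae_eq_condExp (μ := μ) hW hX ht] with ω h1 h2 h3
  rw [← h2, ← h3, h1, Kernel.prodMkRight_apply]

/-- Conditional independence of `Y` and `X` given `m₂` passes to a smaller σ-algebra `m₁` when the
conditional law of `X` given `m₂` is already `m₁`-measurable. -/
lemma condIndepFun_of_condExp_eq {Ω : Type*} {m₁ m₂ : MeasurableSpace Ω} [mΩ : MeasurableSpace Ω]
    [StandardBorelSpace Ω] {μ : Measure Ω} [IsFiniteMeasure μ] {X Y : Ω → ℝ}
    (hX : Measurable X) (hY : Measurable Y) (h₁₂ : m₁ ≤ m₂) (h₂ : m₂ ≤ mΩ)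
    (hXm : ∀ t, MeasurableSet t → (μ⟦X ⁻¹' t | m₂⟧) =ᵐ[μ] (μ⟦X ⁻¹' t | m₁⟧))
    (h : CondIndepFun m₂ h₂ Y X μ) : CondIndepFun m₁ (h₁₂.trans h₂) Y X μ := by
  rw [condIndepFun_iff_condExp_inter_preimage_eq_mul hY hX] at h ⊢
  intro s t hs ht
  have hb : ∀ᵐ ω ∂μ, ‖(μ⟦X ⁻¹' t | m₁⟧) ω‖ ≤ 1 := by
    refine ae_bdd_abs_condExp_of_ae_bdd_abs (Filter.Eventually.of_forall fun ω => ?_)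
    by_cases hω : ω ∈ X ⁻¹' t <;> simp [Set.indicator, hω]
  have hprod : (μ⟦Y ⁻¹' s ∩ X ⁻¹' t | m₂⟧) =ᵐ[μ] (μ⟦X ⁻¹' t | m₁⟧) * (μ⟦Y ⁻¹' s | m₂⟧) := by
    filter_upwards [h s t hs ht, hXm t ht] with ω h1 h2
    rw [h1, h2, Pi.mul_apply, mul_comm]
  have htower := condExp_condExp_of_le (μ := μ)
    (f := (Y ⁻¹' s).indicator fun _ => (1 : ℝ)) h₁₂ h₂
  have htower' := condExp_condExp_of_le (μ := μ)
    (f := (Y ⁻¹' s ∩ X ⁻¹' t).indicator fun _ => (1 : ℝ)) h₁₂ h₂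
  have hpull := condExp_stronglyMeasurable_mul_of_bound (μ := μ) (h₁₂.trans h₂)
    (f := μ⟦X ⁻¹' t | m₁⟧) (g := μ⟦Y ⁻¹' s | m₂⟧) stronglyMeasurable_condExp
    integrable_condExp _ hb
  filter_upwards [htower, htower', hpull, condExp_congr_ae (m := m₁) hprod] with ω h1 h2 h3 h4
  rw [← h2, h4, h3, Pi.mul_apply, h1, mul_comm]

/-- Soundness of treatment Markov blankets: if the full family `V_I` controls
for confounding, then every treatment Markov blanket `J ∈ 𝔯_A(V)` controls for confounding:
`Y_a ⊥⊥ A | V_J` for `a = 0, 1`. -/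
theorem treatBlanket_sound
    {Ω I : Type*} [MeasurableSpace Ω] [StandardBorelSpace Ω] [Fintype I]
    (μ : Measure Ω) [IsProbabilityMeasure μ]
    (A Y0 Y1 : Ω → ℝ) (V : I → Ω → ℝ)
    (hA : Measurable A) (hY0 : Measurable Y0) (hY1 : Measurable Y1)
    (hV : ∀ i, Measurable (V i))
    (hbin : IsBinary A)
    (hS : ControlsConfounding μ A Y0 Y1 (subvec V Set.univ)) :
    ∀ J : Set I, IsTreatBlanket μ A V J → ControlsConfounding μ A Y0 Y1 (subvec V J) := by
  intro J hJ
  have key : ∀ Y : Ω → ℝ, Measurable Y → CondIndepGiven μ Y A (subvec V Set.univ) →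
      CondIndepGiven μ Y A (subvec V J) := by
    rintro Y hY ⟨hle, hYA⟩
    refine ⟨_, condIndepFun_of_condExp_eq hA hY (comap_subvec_mono V (Set.subset_univ J)) hle
      (fun t ht => ?_) hYA⟩
    rw [comap_subvec_univ V J]
    exact condExp_eq_of_condIndepGiven hA (measurable_subvec fun i _ => hV i)
      (measurable_subvec fun i _ => hV i) hJ ht
  exact ⟨key Y0 hY0 hS.1, key Y1 hY1 hS.2⟩
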